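/- Let n ≥ 3, let r be an integer with 1 ≤ r ≤ n − 2, and let p₁, …, pₙ be distinct prime numbers. For each i ∈ {1, …, n}, let bᵢ be the unique integer with 0 ≤ bᵢ < pᵢ and bᵢ · ∏_{j ≠ i} pⱼ ≡ −1 (mod pᵢ). If there exists k ∈ {1, …, n} such that ∑_{i ≠ k} bᵢ/pᵢ ≥ r, then the dilation rΔ(p₁, …, pₙ) is not normal. -/

import Mathlib

/-- A point of `ℝⁿ` is a lattice point if all its coordinates are integers. -/
def IsLatticePoint {n : ℕ} (x : Fin n → ℝ) : Prop := ∀ i, ∃ z : ℤ, x i = (z : ℝ)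

/-- The `k`-th dilation `kS = {k • x : x ∈ S}` of a set `S ⊆ ℝⁿ`. -/
def dilate {n : ℕ} (k : ℕ) (P : Set (Fin n → ℝ)) : Set (Fin n → ℝ) :=
  (fun x => (k : ℝ) • x) '' P

/-- Every lattice point of `kP` is a sum of `k` lattice points of `P`. -/
def IsIDP {n : ℕ} (k : ℕ) (P : Set (Fin n → ℝ)) : Prop :=
  ∀ x ∈ dilate k P, IsLatticePoint x →
    ∃ f : Fin k → (Fin n → ℝ), (∀ i, f i ∈ P ∧ IsLatticePoint (f i)) ∧ x = ∑ i, f i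

/-- A polytope is normal if for every `k ≥ 1` every lattice point of `kP`
is a sum of `k` lattice points of `P`. -/
def IsNormal {n : ℕ} (P : Set (Fin n → ℝ)) : Prop := ∀ k : ℕ, 1 ≤ k → IsIDP k P

/-- A polytope is very ample if there is `k₀` such that for every `k ≥ k₀` every
lattice point of `kP` is a sum of `k` lattice points of `P`. -/
def IsVeryAmple {n : ℕ} (P : Set (Fin n → ℝ)) : Prop :=
  ∃ k₀ : ℕ, ∀ k : ℕ, k₀ ≤ k → IsIDP k P

/-- The rectangular simplex `Δ(λ) = conv{0, λ₁e₁, …, λₙeₙ}`. -/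
def rectSimplex {n : ℕ} (lam : Fin n → ℕ) : Set (Fin n → ℝ) :=
  convexHull ℝ (insert 0 (Set.range fun i => Pi.single i ((lam i : ℝ))))

/-- An edge of `P`: a segment between two distinct extreme points of `P`
which is an extreme subset of `P`. -/
def IsEdge {n : ℕ} (P : Set (Fin n → ℝ)) (v w : Fin n → ℝ) : Prop :=
  v ≠ w ∧ v ∈ P.extremePoints ℝ ∧ w ∈ P.extremePoints ℝ ∧
    IsExtreme ℝ P (segment ℝ v w)

/-- `P` has at least `k` lattice points on every edge. -/
def LPE {n : ℕ} (k : ℕ) (P : Set (Fin n → ℝ)) : Prop :=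
  ∀ v w, IsEdge P v w →
    ∃ S : Finset (Fin n → ℝ), k ≤ S.card ∧ ∀ x ∈ S, x ∈ segment ℝ v w ∧ IsLatticePoint x

/-- The normality index: the least `k₀` such that `kP` is normal for all `k ≥ k₀`. -/
noncomputable def munorm {n : ℕ} (P : Set (Fin n → ℝ)) : ℕ :=
  sInf {k₀ : ℕ | ∀ k : ℕ, k₀ ≤ k → IsNormal (dilate k P)}

/-- Almost 1-normality: with `L = lcm λᵢ`, `Lᵢ = L/λᵢ`, `d = gcd Lᵢ`, the number
`L - d` lies in the additive submonoid of `ℕ` generated by the `Lᵢ`. -/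
def IsA1N {n : ℕ} (lam : Fin n → ℕ) : Prop :=
  Finset.univ.lcm lam - Finset.univ.gcd (fun i => Finset.univ.lcm lam / lam i) ∈
    AddSubmonoid.closure (Set.range fun i => Finset.univ.lcm lam / lam i)

/-!
A lattice point `z ≥ 0` lies in `rΔ(p)` exactly when its integral weight
`w(z) = ∑ zᵢ ∏_{j ≠ i} pⱼ` is at most `rL`, where `L = ∏ pⱼ`. By the choice of `b`, a lattice point
`z ≥ 0` of weight `≡ -1 (mod L)` satisfies `z ≥ b` coordinatewise, and `w(b) ≥ rL` by
assumption; so `rΔ(p)` has no lattice point of weight `rL - 1`. On the other hand the Chinese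
remainder theorem gives `w(b) = mL - 1`, and moving `b` along one axis yields a lattice point of
`m(rΔ(p))` of weight `m(rL) - 1`. In any decomposition of it into `m` lattice points of `rΔ(p)` the
deficits `rL - w` are nonnegative integers with sum `1`, so some summand would have weight `rL - 1`.
-/

open Finset

section Convex

variable {𝕜 E ι : Type*} [Field 𝕜] [LinearOrder 𝕜] [IsStrictOrderedRing 𝕜]
  [AddCommGroup E] [Module 𝕜 E] [Fintype ι]

lemma sum_smul_mem_of_convex_of_zero_mem {s : Set E} (hs : Convex 𝕜 s) (hzero : 0 ∈ s)
    {w : ι → 𝕜} {v : ι → E} (hw : ∀ i, 0 ≤ w i) (hsum : ∑ i, w i ≤ 1) (hv : ∀ i, v i ∈ s) :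
    ∑ i, w i • v i ∈ s := by
  have hmem := hs.sum_mem (t := univ)
    (w := fun o : Option ι => o.elim (1 - ∑ i, w i) w) (z := fun o => o.elim 0 v)
    (by rintro (_ | i) _; exacts [sub_nonneg.2 hsum, hw i])
    (by simp [Fintype.sum_option])
    (by rintro (_ | i) _; exacts [hzero, hv i])
  simpa [Fintype.sum_option] using hmem

end Convex

section Congruence

variable {m q b z : ℤ}

lemma isCoprime_of_mul_modEq_neg_one (hb : b * q ≡ -1 [ZMOD m]) : IsCoprime m q := by
  obtain ⟨t, ht⟩ := hb.dvd
  exact ⟨-t, -b, by linear_combination ht⟩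

lemma le_of_mul_modEq_neg_one (hb : b * q ≡ -1 [ZMOD m]) (hz : z * q ≡ -1 [ZMOD m])
    (hbm : b < m) (hz0 : 0 ≤ z) : b ≤ z := by
  have hdvd : m ∣ b - z := by
    refine (isCoprime_of_mul_modEq_neg_one hb).dvd_of_dvd_mul_right ?_
    simpa only [sub_mul] using (hz.trans hb.symm).dvd
  by_contra! hlt
  linarith [Int.le_of_dvd (sub_pos.2 hlt) hdvd]

end Congruence

lemma exists_eq_sub_one_of_sum_eq {κ : Type*} {s : Finset κ} {f : κ → ℤ} {N : ℤ}
    (hle : ∀ l ∈ s, f l ≤ N) (hsum : ∑ l ∈ s, f l = #s * N - 1) : ∃ l ∈ s, f l = N - 1 := by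
  have hdeficit : ∑ l ∈ s, (N - f l) = 1 := by
    simp [sum_sub_distrib, hsum]
  have hnonneg : ∀ l ∈ s, 0 ≤ N - f l := fun l hl => sub_nonneg.2 (hle l hl)
  obtain ⟨l, hl, hne⟩ := exists_ne_zero_of_sum_ne_zero (hdeficit.trans_ne one_ne_zero)
  have hle_one : N - f l ≤ 1 := hdeficit ▸ single_le_sum hnonneg hl
  have hpos : 0 < N - f l := (hnonneg l hl).lt_of_ne' hne
  exact ⟨l, hl, by omega⟩

section CofactorWeight

variable {ι : Type*} [Fintype ι] [DecidableEq ι] {p b z : ι → ℤ}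

/-- The integral weight `∑ i, z i * ∏ j ≠ i, p j` of `z`, that is, `∑ i, z i / p i` with
denominators cleared. -/
def cofactorWeight (p : ι → ℤ) : (ι → ℤ) →ₗ[ℤ] ℤ :=
  Fintype.linearCombination ℤ fun i => ∏ j ∈ univ.erase i, p j

lemma cofactorWeight_apply (p z : ι → ℤ) :
    cofactorWeight p z = ∑ i, z i * ∏ j ∈ univ.erase i, p j :=
  Fintype.linearCombination_apply ..

lemma cofactorWeight_single_self (p : ι → ℤ) (i : ι) :
    cofactorWeight p (Pi.single i (p i)) = ∏ j, p j := by
  rw [cofactorWeight, Fintype.linearCombination_apply_single, smul_eq_mul,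
    mul_prod_erase _ _ (mem_univ i)]

lemma cofactorWeight_mono (hp : 0 ≤ p) : Monotone (cofactorWeight p) := by
  intro y z hyz
  simp only [cofactorWeight_apply]
  gcongr with i
  · exact prod_nonneg fun j _ => hp j
  · exact hyz i

lemma cofactorWeight_nonneg (hp : 0 ≤ p) (hz : 0 ≤ z) : 0 ≤ cofactorWeight p z :=
  map_zero (cofactorWeight p) ▸ cofactorWeight_mono hp hz

lemma cofactorWeight_modEq (p z : ι → ℤ) (i : ι) :
    cofactorWeight p z ≡ z i * ∏ j ∈ univ.erase i, p j [ZMOD p i] := by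
  have hdvd : p i ∣ ∑ l ∈ univ.erase i, z l * ∏ j ∈ univ.erase l, p j :=
    dvd_sum fun l hl => (dvd_prod_of_mem p
      (mem_erase.2 ⟨(ne_of_mem_erase hl).symm, mem_univ i⟩)).mul_left (z l)
  rw [cofactorWeight_apply, ← add_sum_erase _ _ (mem_univ i)]
  exact Int.modEq_iff_dvd.2 (by simpa using hdvd.neg_right)

lemma sum_intCast_div_eq_cofactorWeight_div {K : Type*} [Field K] [CharZero K]
    (hp : ∀ i, p i ≠ 0) (z : ι → ℤ) :
    ∑ i, (z i : K) / p i = cofactorWeight p z / (∏ i, p i : ℤ) := by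
  rw [cofactorWeight_apply, Int.cast_sum, sum_div]
  refine sum_congr rfl fun i _ => ?_
  have hcofactor : ∏ j ∈ univ.erase i, p j ≠ 0 := prod_ne_zero_iff.2 fun j _ => hp j
  rw [← mul_prod_erase univ p (mem_univ i), Int.cast_mul, Int.cast_mul,
    mul_div_mul_right _ _ (Int.cast_ne_zero.2 hcofactor)]

section OrderedField

variable {K : Type*} [Field K] [LinearOrder K] [IsStrictOrderedRing K] {c : ℤ}

lemma sum_intCast_div_le_iff_cofactorWeight_le (hp : ∀ i, 0 < p i) :
    ∑ i, (z i : K) / p i ≤ c ↔ cofactorWeight p z ≤ c * ∏ i, p i := by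
  rw [sum_intCast_div_eq_cofactorWeight_div (fun i => (hp i).ne'),
    div_le_iff₀ (Int.cast_pos.2 (prod_pos fun i _ => hp i)), ← Int.cast_mul, Int.cast_le]

lemma le_sum_intCast_div_iff_le_cofactorWeight (hp : ∀ i, 0 < p i) :
    c ≤ ∑ i, (z i : K) / p i ↔ c * ∏ i, p i ≤ cofactorWeight p z := by
  rw [sum_intCast_div_eq_cofactorWeight_div (fun i => (hp i).ne'),
    le_div_iff₀ (Int.cast_pos.2 (prod_pos fun i _ => hp i)), ← Int.cast_mul, Int.cast_le]

end OrderedField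

variable (hb : ∀ i, b i * ∏ j ∈ univ.erase i, p j ≡ -1 [ZMOD p i])
include hb

lemma pairwise_isCoprime_of_mul_prod_erase_modEq_neg_one :
    Pairwise fun i j => IsCoprime (p i) (p j) := fun i _ hij =>
  (isCoprime_of_mul_modEq_neg_one (hb i)).of_isCoprime_of_dvd_right
    (dvd_prod_of_mem p (mem_erase.2 ⟨hij.symm, mem_univ _⟩))

lemma prod_dvd_cofactorWeight_add_one : ∏ i, p i ∣ cofactorWeight p b + 1 := by
  refine Fintype.prod_dvd_of_coprime (pairwise_isCoprime_of_mul_prod_erase_modEq_neg_one hb)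
    fun i => ?_
  simpa using ((cofactorWeight_modEq p b i).trans (hb i)).symm.dvd

lemma le_of_cofactorWeight_modEq_neg_one (hbp : ∀ i, b i < p i) (hz : 0 ≤ z)
    (hmod : cofactorWeight p z ≡ -1 [ZMOD ∏ i, p i]) : b ≤ z := by
  intro i
  have hmod_i : cofactorWeight p z ≡ -1 [ZMOD p i] := hmod.of_dvd (dvd_prod_of_mem p (mem_univ i))
  exact le_of_mul_modEq_neg_one (hb i) ((cofactorWeight_modEq p z i).symm.trans hmod_i)
    (hbp i) (hz i)

lemma exists_nonneg_cofactorWeight_eq_mul_sub_one [Nonempty ι] (hp : ∀ i, 0 < p i)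
    (hb0 : 0 ≤ b) {r : ℤ} (hr : 1 ≤ r) :
    ∃ m : ℕ, 1 ≤ m ∧ ∃ z, 0 ≤ z ∧ cofactorWeight p z = m * (r * ∏ i, p i) - 1 := by
  obtain ⟨m, hm⟩ := prod_dvd_cofactorWeight_add_one hb
  have hm_pos : 0 < m := by
    have hweight : 0 ≤ cofactorWeight p b := cofactorWeight_nonneg (fun i => (hp i).le) hb0
    exact pos_of_mul_pos_right (by omega) (prod_nonneg fun i _ => (hp i).le : 0 ≤ ∏ i, p i)
  lift m to ℕ using hm_pos.le
  obtain ⟨i⟩ := ‹Nonempty ι›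
  refine ⟨m, by exact_mod_cast hm_pos, b + (m * (r - 1)) • Pi.single i (p i), ?_, ?_⟩
  · exact add_nonneg hb0 (smul_nonneg (mul_nonneg hm_pos.le (by omega))
      (Pi.single_nonneg.2 (hp i).le))
  · rw [map_add, map_smul, cofactorWeight_single_self, smul_eq_mul]
    linear_combination hm

lemma cofactorWeight_ne_mul_prod_sub_one (hp : 0 ≤ p) (hbp : ∀ i, b i < p i) {r : ℤ}
    (hweight : r * ∏ i, p i ≤ cofactorWeight p b) (hz : 0 ≤ z) :
    cofactorWeight p z ≠ r * ∏ i, p i - 1 := by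
  intro heq
  have hmod : cofactorWeight p z ≡ -1 [ZMOD ∏ i, p i] := by
    rw [heq, Int.modEq_iff_dvd]
    exact ⟨-r, by ring⟩
  have hmono := cofactorWeight_mono hp (le_of_cofactorWeight_modEq_neg_one hb hbp hz hmod)
  omega

end CofactorWeight

section Dilate

variable {n : ℕ}

lemma dilate_dilate (k r : ℕ) (P : Set (Fin n → ℝ)) :
    dilate k (dilate r P) = dilate (k * r) P := by
  simp only [dilate, Set.image_image, smul_smul, Nat.cast_mul]

lemma mem_dilate_iff_inv_smul_mem {k : ℕ} (hk : k ≠ 0) {P : Set (Fin n → ℝ)} {x : Fin n → ℝ} :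
    x ∈ dilate k P ↔ (k : ℝ)⁻¹ • x ∈ P :=
  Set.mem_smul_set_iff_inv_smul_mem₀ (Nat.cast_ne_zero.2 hk) P x

lemma IsIDP.exists_intCast_mem {k : ℕ} {P : Set (Fin n → ℝ)} (hP : IsIDP k P) {z : Fin n → ℤ}
    (hz : (fun i => (z i : ℝ)) ∈ dilate k P) :
    ∃ g : Fin k → Fin n → ℤ, (∀ l, (fun i => (g l i : ℝ)) ∈ P) ∧ z = ∑ l, g l := by
  obtain ⟨f, hf, hsum⟩ := hP _ hz fun i => ⟨z i, rfl⟩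
  choose hfP g hg using hf
  refine ⟨g, fun l => funext (hg l) ▸ hfP l, funext fun i => ?_⟩
  have hcoord := congrFun hsum i
  simp only [Finset.sum_apply, hg] at hcoord ⊢
  exact_mod_cast hcoord

end Dilate

section RectSimplex

variable {n : ℕ} {lam : Fin n → ℕ}

lemma mem_rectSimplex_iff (hlam : ∀ i, 0 < lam i) {x : Fin n → ℝ} :
    x ∈ rectSimplex lam ↔ 0 ≤ x ∧ ∑ i, x i / lam i ≤ 1 := by
  have hlam0 : ∀ i, (lam i : ℝ) ≠ 0 := fun i => Nat.cast_ne_zero.2 (hlam i).ne'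
  constructor
  · have hlinear : IsLinearMap ℝ fun y : Fin n → ℝ => ∑ i, y i / lam i :=
      ⟨fun y z => by simp [add_div, sum_add_distrib], fun c y => by simp [mul_div_assoc, mul_sum]⟩
    refine fun hx => convexHull_min ?_ ((convex_Ici 0).inter (convex_halfSpace_le hlinear 1)) hx
    rintro _ (rfl | ⟨i, rfl⟩)
    · simp
    · simp [Pi.single_apply, ite_div, hlam0]
  · rintro ⟨hx, hsum⟩
    have hcomb : x = ∑ i, (x i / lam i) • Pi.single i (lam i : ℝ) := by
      simp [← Pi.single_smul, hlam0, univ_sum_single]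
    rw [hcomb]
    exact sum_smul_mem_of_convex_of_zero_mem (convex_convexHull ℝ _)
      (subset_convexHull ℝ _ (Set.mem_insert _ _))
      (fun i => div_nonneg (hx i) (Nat.cast_nonneg _)) hsum
      fun i => subset_convexHull ℝ _ (Set.mem_insert_of_mem _ ⟨i, rfl⟩)

lemma mem_dilate_rectSimplex_iff (hlam : ∀ i, 0 < lam i) {r : ℕ} (hr : 0 < r) {x : Fin n → ℝ} :
    x ∈ dilate r (rectSimplex lam) ↔ 0 ≤ x ∧ ∑ i, x i / lam i ≤ r := by
  have hr' : (0 : ℝ) < r := Nat.cast_pos.2 hr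
  rw [mem_dilate_iff_inv_smul_mem hr.ne', mem_rectSimplex_iff hlam,
    smul_nonneg_iff_nonneg_of_pos_left (inv_pos.2 hr')]
  simp only [Pi.smul_apply, smul_eq_mul, mul_div_assoc, ← mul_sum, inv_mul_le_iff₀ hr', mul_one]

lemma intCast_mem_dilate_rectSimplex_iff (hlam : ∀ i, 0 < lam i) {r : ℕ} (hr : 0 < r)
    {z : Fin n → ℤ} :
    (fun i => (z i : ℝ)) ∈ dilate r (rectSimplex lam) ↔
      0 ≤ z ∧ cofactorWeight (fun i => (lam i : ℤ)) z ≤ r * ∏ i, (lam i : ℤ) := by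
  have hsum := sum_intCast_div_le_iff_cofactorWeight_le (K := ℝ) (z := z) (c := r)
    fun i => Int.natCast_pos.2 (hlam i)
  simp only [Int.cast_natCast] at hsum
  rw [mem_dilate_rectSimplex_iff hlam hr, hsum]
  exact and_congr_left' (by simp [Pi.le_def])

end RectSimplex

theorem stmt_15_general (n r : ℕ) (hr : 1 ≤ r) (p b : Fin n → ℕ) (hb : ∀ i, b i < p i)
    (hbmod : ∀ i, Int.ModEq (p i) ((b i : ℤ) * ∏ j ∈ univ.erase i, (p j : ℤ)) (-1))
    (hsum : (r : ℝ) ≤ ∑ i, (b i : ℝ) / (p i : ℝ)) :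
    ¬ IsNormal (dilate r (rectSimplex p)) := by
  have hp : ∀ i, 0 < p i := fun i => (Nat.zero_le _).trans_lt (hb i)
  have hp' : ∀ i, 0 < (p i : ℤ) := fun i => Int.natCast_pos.2 (hp i)
  have hweight : r * ∏ i, (p i : ℤ) ≤ cofactorWeight (fun i => (p i : ℤ)) fun i => (b i : ℤ) :=
    (le_sum_intCast_div_iff_le_cofactorWeight (K := ℝ) hp').1 (by simpa using hsum)
  obtain ⟨i, -, -⟩ := exists_ne_zero_of_sum_ne_zero ((Nat.cast_pos.2 hr).trans_le hsum).ne'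
  have : Nonempty (Fin n) := ⟨i⟩
  obtain ⟨m, hm, z, hz, hz_weight⟩ := exists_nonneg_cofactorWeight_eq_mul_sub_one hbmod hp'
    (fun i => Int.natCast_nonneg (b i)) (Nat.one_le_cast.2 hr)
  intro hnormal
  obtain ⟨g, hg, rfl⟩ := (hnormal m hm).exists_intCast_mem (z := z) <| by
    rw [dilate_dilate, intCast_mem_dilate_rectSimplex_iff hp (Nat.mul_pos hm hr), hz_weight]
    exact ⟨hz, by push_cast; linarith⟩
  simp only [intCast_mem_dilate_rectSimplex_iff hp hr] at hg
  obtain ⟨l, -, hl⟩ := exists_eq_sub_one_of_sum_eq (s := univ) (fun l _ => (hg l).2)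
    (by simpa [map_sum] using hz_weight)
  exact cofactorWeight_ne_mul_prod_sub_one hbmod (fun i => (hp' i).le)
    (fun i => Int.ofNat_lt.2 (hb i)) hweight (hg l).1 hl

/-- Let `p₁, …, pₙ` be distinct primes, `1 ≤ r ≤ n - 2`, and for
each `i` let `bᵢ` be the unique integer in `[0, pᵢ)` with
`bᵢ · ∏_{j ≠ i} pⱼ ≡ -1 (mod pᵢ)`. If `∑_{i ≠ k} bᵢ/pᵢ ≥ r` for some `k`, then
`rΔ(p₁, …, pₙ)` is not normal. -/
theorem stmt_15 (n : ℕ) (hn : 3 ≤ n) (r : ℕ) (hr1 : 1 ≤ r) (hr2 : r ≤ n - 2)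
    (p : Fin n → ℕ) (hp : ∀ i, (p i).Prime) (hinj : Function.Injective p)
    (b : Fin n → ℕ) (hb : ∀ i, b i < p i)
    (hbmod : ∀ i, Int.ModEq (p i)
      ((b i : ℤ) * ∏ j ∈ Finset.univ.erase i, (p j : ℤ)) (-1))
    (hk : ∃ k, (r : ℝ) ≤ ∑ i ∈ Finset.univ.erase k, (b i : ℝ) / (p i : ℝ)) :
    ¬ IsNormal (dilate r (rectSimplex p)) := by
  obtain ⟨k, hk⟩ := hk
  exact stmt_15_general n r hr1 p b hb hbmod (hk.trans
    (Finset.sum_le_univ_sum_of_nonneg fun i => by positivity))
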